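/- (Lemma C.2, error bound for the dual ascent step on the regularized problem) Let p > l, τ₂ > 0, and define f̂(x, y; z) := f(x, y) + (p/2)·‖x − z‖², x*(y, z) := argmin_x f̂(x, y; z), x*(z) := argmin_x max_y f̂(x, y; z), and y⁺(z) := y + τ₂·∇_y f̂(x*(y, z), y; z). Then for every (y, z): ‖x*(z) − x*(y⁺(z), z)‖² ≤ (1/((p − l)·μ)) · (1 + τ₂·l + τ₂·l·(p + l)/(p − l))² · ‖∇_y f̂(x*(y, z), y; z)‖². -/

import Mathlib

open MeasureTheory Real

/-- Partial gradient of `f` in the first (primal) variable. -/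
noncomputable def gradx {d1 d2 : ℕ}
    (f : EuclideanSpace ℝ (Fin d1) → EuclideanSpace ℝ (Fin d2) → ℝ)
    (x : EuclideanSpace ℝ (Fin d1)) (y : EuclideanSpace ℝ (Fin d2)) :
    EuclideanSpace ℝ (Fin d1) :=
  gradient (fun x' => f x' y) x

/-- Partial gradient of `f` in the second (dual) variable. -/
noncomputable def grady {d1 d2 : ℕ}
    (f : EuclideanSpace ℝ (Fin d1) → EuclideanSpace ℝ (Fin d2) → ℝ)
    (x : EuclideanSpace ℝ (Fin d1)) (y : EuclideanSpace ℝ (Fin d2)) :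
    EuclideanSpace ℝ (Fin d2) :=
  gradient (f x) y

/-- The primal function `Φ(x) = max_y f(x,y)`. -/
noncomputable def primal {d1 d2 : ℕ}
    (f : EuclideanSpace ℝ (Fin d1) → EuclideanSpace ℝ (Fin d2) → ℝ)
    (x : EuclideanSpace ℝ (Fin d1)) : ℝ :=
  ⨆ y, f x y

theorem aux_descent {E : Type*} [NormedAddCommGroup E] [InnerProductSpace ℝ E] [CompleteSpace E]
    (g : E → ℝ) (l : ℝ) (hg : Differentiable ℝ g)
    (hlip : ∀ a b, ‖gradient g a - gradient g b‖ ≤ l * ‖a - b‖) (a d : E) :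
    g a + inner ℝ (gradient g a) d - l / 2 * ‖d‖ ^ 2 ≤ g (a + d) := by
  have hder : ∀ t : ℝ, HasDerivAt
      (fun t : ℝ => g (a + t • d) - t * inner ℝ (gradient g a) d + t ^ 2 * (l / 2 * ‖d‖ ^ 2))
      (inner ℝ (gradient g (a + t • d)) d - 1 * inner ℝ (gradient g a) d
        + (2 * t) * (l / 2 * ‖d‖ ^ 2)) t := by
    intro t
    have h1 : HasDerivAt (fun t : ℝ => a + t • d) d t := by
      simpa using ((hasDerivAt_id t).smul_const d).const_add a
    have h2 := ((hg (a + t • d)).hasGradientAt.hasFDerivAt).comp_hasDerivAt t h1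
    have h3 : HasDerivAt (fun t : ℝ => t ^ 2) (2 * t) t := by
      simpa using hasDerivAt_pow 2 t
    exact (h2.sub ((hasDerivAt_id t).mul_const _)).add (h3.mul_const _)
  have hmono : MonotoneOn (fun t : ℝ => g (a + t • d) - t * inner ℝ (gradient g a) d
      + t ^ 2 * (l / 2 * ‖d‖ ^ 2)) (Set.Icc 0 1) := by
    apply monotoneOn_of_deriv_nonneg (convex_Icc 0 1)
    · exact fun t _ => (hder t).continuousAt.continuousWithinAt
    · exact fun t _ => (hder t).differentiableAt.differentiableWithinAt
    · intro t ht
      rw [interior_Icc] at ht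
      rw [(hder t).deriv]
      have h1 := abs_real_inner_le_norm (gradient g (a + t • d) - gradient g a) d
      have h2 := hlip (a + t • d) a
      rw [add_sub_cancel_left, norm_smul, Real.norm_eq_abs, abs_of_pos ht.1] at h2
      rw [inner_sub_left] at h1
      have h3 := neg_abs_le (inner ℝ (gradient g (a + t • d)) d - inner ℝ (gradient g a) d)
      have h4 := mul_le_mul_of_nonneg_right h2 (norm_nonneg d)
      nlinarith
  have := hmono (show (0:ℝ) ∈ Set.Icc (0:ℝ) 1 by simp) (show (1:ℝ) ∈ Set.Icc (0:ℝ) 1 by simp)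
    zero_le_one
  simp at this ⊢
  linarith

theorem aux_opt {E : Type*} [NormedAddCommGroup E] [InnerProductSpace ℝ E] [CompleteSpace E]
    (g : E → ℝ) (p : ℝ) (hg : Differentiable ℝ g) (a z : E)
    (hmin : ∀ x, g a + (p / 2) * ‖a - z‖ ^ 2 ≤ g x + (p / 2) * ‖x - z‖ ^ 2) :
    gradient g a = - (p • (a - z)) := by
  have h1 := (hg a).hasGradientAt.hasFDerivAt
  have h2 : HasFDerivAt (fun x : E => x - z) (ContinuousLinearMap.id ℝ E) a :=
    (hasFDerivAt_id a).sub_const z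
  have h3 := h1.add (h2.norm_sq.const_mul (p / 2))
  have h4 : IsLocalMin (fun x => g x + (p / 2) * ‖x - z‖ ^ 2) a :=
    Filter.Eventually.of_forall hmin
  have h5 := h4.hasFDerivAt_eq_zero h3
  refine ext_inner_right ℝ fun v => ?_
  have h6 := congrArg (fun L => L v) h5
  simp at h6
  rw [inner_neg_left, real_inner_smul_left, inner_sub_left]
  simp
  linarith

/-- **Lemma C.2 (error bound for the dual ascent step on the regularized problem).** For `p > l`,
with `f̂(x,y;z) = f(x,y) + (p/2)‖x − z‖²`, `x*(y,z)` the minimizer of `x ↦ f̂(x,y;z)`, `x*(z)`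
the minimizer of `x ↦ max_y f̂(x,y;z)`, and `y⁺(z) = y + τ₂∇_y f̂(x*(y,z),y;z)`
(note `∇_y f̂ = ∇_y f`), one has
`‖x*(z) − x*(y⁺(z),z)‖² ≤ (1/((p−l)μ))(1 + τ₂l + τ₂l(p+l)/(p−l))²‖∇_y f̂(x*(y,z),y;z)‖²`. -/
theorem dual_ascent_error_bound
    {d1 d2 : ℕ}
    (f : EuclideanSpace ℝ (Fin d1) → EuclideanSpace ℝ (Fin d2) → ℝ)
    (l μ : ℝ) (hl : 0 < l) (hμ : 0 < μ)
    (hdiff : Differentiable ℝ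
      (fun q : EuclideanSpace ℝ (Fin d1) × EuclideanSpace ℝ (Fin d2) => f q.1 q.2))
    (hlipx : ∀ x₁ x₂ y₁ y₂,
      ‖gradx f x₁ y₁ - gradx f x₂ y₂‖ ≤ l * (‖x₁ - x₂‖ + ‖y₁ - y₂‖))
    (hlipy : ∀ x₁ x₂ y₁ y₂,
      ‖grady f x₁ y₁ - grady f x₂ y₂‖ ≤ l * (‖x₁ - x₂‖ + ‖y₁ - y₂‖))
    (hattain : ∀ x, ∃ ys, ∀ y, f x y ≤ f x ys)
    (hPL : ∀ x y, 2 * μ * (primal f x - f x y) ≤ ‖grady f x y‖ ^ 2)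
    (p τ2 : ℝ) (hp : l < p) (hτ2 : 0 < τ2)
    (X : EuclideanSpace ℝ (Fin d2) → EuclideanSpace ℝ (Fin d1) → EuclideanSpace ℝ (Fin d1))
    (hX : ∀ y z x, f (X y z) y + (p / 2) * ‖X y z - z‖ ^ 2 ≤ f x y + (p / 2) * ‖x - z‖ ^ 2)
    (Xz : EuclideanSpace ℝ (Fin d1) → EuclideanSpace ℝ (Fin d1))
    (hXz : ∀ z x, (⨆ y, f (Xz z) y + (p / 2) * ‖Xz z - z‖ ^ 2) ≤
      ⨆ y, f x y + (p / 2) * ‖x - z‖ ^ 2) :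
    ∀ y z,
      ‖Xz z - X (y + τ2 • grady f (X y z) y) z‖ ^ 2 ≤
        (1 / ((p - l) * μ)) * (1 + τ2 * l + τ2 * l * (p + l) / (p - l)) ^ 2 *
          ‖grady f (X y z) y‖ ^ 2 := by
  intro y z
  have hdx : ∀ y, Differentiable ℝ (fun x => f x y) := fun y =>
    hdiff.comp (differentiable_id.prodMk (differentiable_const y))
  have hpl : 0 < p - l := sub_pos.mpr hp
  set g := grady f (X y z) y with hgdef
  set yp := y + τ2 • g with hyp
  have hyd : ‖yp - y‖ = τ2 * ‖g‖ := by
    rw [hyp, add_sub_cancel_left, norm_smul, Real.norm_eq_abs, abs_of_pos hτ2]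
  have ho : ∀ y, gradx f (X y z) y = - (p • (X y z - z)) := fun y =>
    aux_opt (fun x => f x y) p (hdx y) (X y z) z (hX y z)
  -- Lipschitz bound for the minimizers
  have hXl : ‖X yp z - X y z‖ ≤ (p + l) / (p - l) * (τ2 * ‖g‖) := by
    have h1 := hlipx (X y z) (X yp z) y yp
    have e : gradx f (X y z) y - gradx f (X yp z) yp = p • (X yp z - X y z) := by
      rw [ho, ho, ← sub_eq_zero]; module
    rw [e, norm_smul, Real.norm_eq_abs, abs_of_pos (hl.trans hp), norm_sub_rev (X y z),
      norm_sub_rev y, hyd] at h1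
    rw [div_mul_eq_mul_div, le_div_iff₀ hpl]
    have : 0 ≤ p * (τ2 * ‖g‖) := by have := hl.trans hp; positivity
    nlinarith
  have hG : ‖grady f (X yp z) yp‖ ≤ (1 + τ2 * l + τ2 * l * (p + l) / (p - l)) * ‖g‖ := by
    have h1 := hlipy (X yp z) (X y z) yp y
    have h2 := norm_le_norm_add_norm_sub' (grady f (X yp z) yp) g
    rw [hyd] at h1
    have h3 := mul_le_mul_of_nonneg_left hXl hl.le
    have e : (1 + τ2 * l + τ2 * l * (p + l) / (p - l)) * ‖g‖ =
      ‖g‖ + (l * ((p + l) / (p - l) * (τ2 * ‖g‖)) + l * (τ2 * ‖g‖)) := by ring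
    rw [e]
    linarith
  -- strong convexity
  have hsc : f (X yp z) yp + (p / 2) * ‖X yp z - z‖ ^ 2 + (p - l) / 2 * ‖Xz z - X yp z‖ ^ 2 ≤
      f (Xz z) yp + (p / 2) * ‖Xz z - z‖ ^ 2 := by
    have h1 := aux_descent (fun x => f x yp) l (hdx yp)
      (fun a b => by simpa [gradx] using hlipx a b yp yp) (X yp z) (Xz z - X yp z)
    have h2 : gradient (fun x => f x yp) (X yp z) = - (p • (X yp z - z)) := ho yp
    rw [h2, inner_neg_left, real_inner_smul_left] at h1
    have e : Xz z - z = (X yp z - z) + (Xz z - X yp z) := by abel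
    have h3 := norm_add_sq_real (X yp z - z) (Xz z - X yp z)
    rw [← e] at h3
    simp only [add_sub_cancel] at h1
    rw [h3]
    linarith
  have hsup : ∀ x, (⨆ y, f x y + (p / 2) * ‖x - z‖ ^ 2) = primal f x + (p / 2) * ‖x - z‖ ^ 2 := by
    intro x
    obtain ⟨ys, hys⟩ := hattain x
    exact (ciSup_add ⟨f x ys, by rintro _ ⟨y, rfl⟩; exact hys y⟩ _).symm
  have h1 := hXz z (X yp z)
  rw [hsup, hsup] at h1
  have h2 : f (Xz z) yp ≤ primal f (Xz z) := by
    obtain ⟨ys, hys⟩ := hattain (Xz z)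
    exact le_ciSup (f := fun y => f (Xz z) y) ⟨f (Xz z) ys, by rintro _ ⟨y, rfl⟩; exact hys y⟩ yp
  have h3 := hPL (X yp z) yp
  have h4 : (p - l) / 2 * ‖Xz z - X yp z‖ ^ 2 ≤ primal f (X yp z) - f (X yp z) yp := by linarith
  have h5 := mul_le_mul_of_nonneg_left h4 (by positivity : 0 ≤ 2 * μ)
  have h6 := pow_le_pow_left₀ (norm_nonneg _) hG 2
  rw [mul_pow] at h6
  rw [mul_assoc, one_div_mul_eq_div, le_div_iff₀ (by positivity)]
  nlinarith
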